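/- arXiv:2406.11488 — 2 statements merged into one kernel-verified Lean document; each statement's English description precedes it below -/
import Mathlib

section
/- Let T be a deterministic two-way parity transducer with input alphabet A and output alphabet B. Then the partial function ⟦T⟧ is continuous on its domain: for every x ∈ dom(T) and every i ≥ 0 there exists j ≥ 0 such that for all y ∈ dom(T), if |x ∧ y| ≥ j then |⟦T⟧(x) ∧ ⟦T⟧(y)| ≥ i. Equivalently, ⟦T⟧ : dom(T) → B^ω is continuous for the metrics d(u,v) = 2^{−|u∧v|} on A^ω and on B^ω, where u ∧ v denotes the longest common prefix of u and v. -/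
namespace Paper

/-! ## Two-way parity automata and transducers over infinite words.

An infinite word over an alphabet `A` is a function `ℕ → A`.
A configuration `⊢ u p v` with `w = u v` is encoded as a pair `(p, |u|) : Q × ℕ`.
The left end-marker `⊢` is encoded as `(none : Option A)`. -/

/-- A two-way automaton (without acceptance condition): states `Q` partitioned into forward
states (`fwd`) and backward states, an initial forward state, and a transition relation `Δ`
over `Q × (A ∪ {⊢}) × Q` where transitions on the end-marker `⊢` (encoded `none`) go from
backward to forward states. -/
structure TwoWayAut (A : Type) where
  Q : Type
  finQ : Fintype Q
  fwd : Q → Prop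
  init : Q
  init_fwd : fwd init
  Δ : Set (Q × Option A × Q)
  marker : ∀ p q, (p, (none : Option A), q) ∈ Δ → ¬ fwd p ∧ fwd q

attribute [instance] TwoWayAut.finQ

variable {A B : Type}

/-- `StepVia M w c t c'` : from configuration `c`, using transition `t`, the automaton `M`
reaches the successor configuration `c'` on input word `w`. -/
def StepVia (M : TwoWayAut A) (w : ℕ → A) (c : M.Q × ℕ)
    (t : M.Q × Option A × M.Q) (c' : M.Q × ℕ) : Prop :=
  t ∈ M.Δ ∧ t.1 = c.1 ∧ t.2.2 = c'.1 ∧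
    ((M.fwd c.1 ∧ t.2.1 = some (w c.2) ∧
        ((M.fwd c'.1 ∧ c'.2 = c.2 + 1) ∨ (¬ M.fwd c'.1 ∧ c'.2 = c.2))) ∨
     (¬ M.fwd c.1 ∧ 0 < c.2 ∧ t.2.1 = some (w (c.2 - 1)) ∧
        ((M.fwd c'.1 ∧ c'.2 = c.2) ∨ (¬ M.fwd c'.1 ∧ c'.2 = c.2 - 1))) ∨
     (¬ M.fwd c.1 ∧ c.2 = 0 ∧ t.2.1 = none ∧ c'.2 = 0))

/-- The successor relation on configurations. -/
def Step (M : TwoWayAut A) (w : ℕ → A) (c c' : M.Q × ℕ) : Prop :=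
  ∃ t, StepVia M w c t c'

/-- An infinite run of `M` on `w`, given by its configurations and the transitions taken. -/
def IsRun (M : TwoWayAut A) (w : ℕ → A) (cfg : ℕ → M.Q × ℕ)
    (tr : ℕ → M.Q × Option A × M.Q) : Prop :=
  cfg 0 = (M.init, 0) ∧ ∀ i, StepVia M w (cfg i) (tr i) (cfg (i + 1))

/-- The run reads the whole word: the prefix lengths are unbounded. -/
def ReadsWhole (M : TwoWayAut A) (cfg : ℕ → M.Q × ℕ) : Prop :=
  ∀ n : ℕ, ∃ i, n ≤ (cfg i).2

/-- `t` occurs infinitely often in the sequence `tr`. -/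
def InfOften {T : Type} (tr : ℕ → T) (t : T) : Prop :=
  ∀ n, ∃ i, n ≤ i ∧ tr i = t

def Deterministic (M : TwoWayAut A) : Prop :=
  ∀ p a q q', (p, a, q) ∈ M.Δ → (p, a, q') ∈ M.Δ → q = q'

def Codeterministic (M : TwoWayAut A) : Prop :=
  ∀ p p' a q, (p, a, q) ∈ M.Δ → (p', a, q) ∈ M.Δ → p = p'

def Reversible (M : TwoWayAut A) : Prop :=
  Deterministic M ∧ Codeterministic M

def Oneway (M : TwoWayAut A) : Prop := ∀ q, M.fwd q

/-- A two-way parity automaton: a two-way automaton together with a finite family of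
coloring functions (indexed by `CIdx`). -/
structure ParityAut (A : Type) extends TwoWayAut A where
  CIdx : Type
  finC : Fintype CIdx
  color : CIdx → (Q × Option A × Q) → ℕ

attribute [instance] ParityAut.finC

/-- The parity acceptance condition: for every coloring function, the minimal color of the
transitions taken infinitely often is even. -/
def ParityCond (M : ParityAut A) (tr : ℕ → M.Q × Option A × M.Q) : Prop :=
  ∀ c : M.CIdx, Even (sInf {m : ℕ | ∃ t, InfOften tr t ∧ M.color c t = m})

/-- Acceptance of an infinite word by a two-way parity automaton. -/
def ParityAut.Accepts (M : ParityAut A) (w : ℕ → A) : Prop :=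
  ∃ cfg tr, IsRun M.toTwoWayAut w cfg tr ∧ ReadsWhole M.toTwoWayAut cfg ∧ ParityCond M tr

/-- All colors of `M` (on its transitions) belong to `{0, …, ℓ-1}`. -/
def ColorsLt (M : ParityAut A) (ℓ : ℕ) : Prop :=
  ∀ (c : M.CIdx) t, t ∈ M.Δ → M.color c t < ℓ

/-- `l` is a prefix of the infinite word `x`. -/
def IsPrefixOf {C : Type} (l : List C) (x : ℕ → C) : Prop :=
  ∀ (i : ℕ) (h : i < l.length), l.get ⟨i, h⟩ = x i

/-- Concatenation of the first `n` words of a sequence of finite words. -/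
def prefixCat {C : Type} (f : ℕ → List C) : ℕ → List C
  | 0 => []
  | n + 1 => prefixCat f n ++ f n

/-- The concatenation of the sequence of finite words `f` is the infinite word `x`. -/
def FlattenTo {C : Type} (f : ℕ → List C) (x : ℕ → C) : Prop :=
  (∀ n, IsPrefixOf (prefixCat f n) x) ∧ ∀ m, ∃ n, m ≤ (prefixCat f n).length

/-- A two-way parity transducer: a two-way parity automaton (whose underlying automaton is
required to be deterministic via hypotheses) together with an output function. -/
structure TwoWayTrans (A B : Type) extends ParityAut A where
  out : (Q × Option A × Q) → List B

/-- `T.Realizes w x` : the word `w` is accepted by (the deterministic transducer) `T`,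
the produced output is infinite and equals `x`.  This is the graph of the partial function
`⟦T⟧ : A^ω ⇀ B^ω`. -/
def TwoWayTrans.Realizes (T : TwoWayTrans A B) (w : ℕ → A) (x : ℕ → B) : Prop :=
  ∃ cfg tr, IsRun T.toTwoWayAut w cfg tr ∧ ReadsWhole T.toTwoWayAut cfg ∧
    ParityCond T.toParityAut tr ∧ FlattenTo (fun i => T.out (tr i)) x

/-- A two-way Büchi transducer: accepting transitions `acc` instead of coloring functions. -/
structure BuchiTrans (A B : Type) extends TwoWayAut A where
  acc : Set (Q × Option A × Q)
  out : (Q × Option A × Q) → List B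

def BuchiTrans.Realizes (T : BuchiTrans A B) (w : ℕ → A) (x : ℕ → B) : Prop :=
  ∃ cfg tr, IsRun T.toTwoWayAut w cfg tr ∧ ReadsWhole T.toTwoWayAut cfg ∧
    (∀ n, ∃ i, n ≤ i ∧ tr i ∈ T.acc) ∧ FlattenTo (fun i => T.out (tr i)) x

/-- A two-way transducer with no acceptance condition. -/
structure NoAccTrans (A B : Type) extends TwoWayAut A where
  out : (Q × Option A × Q) → List B

def NoAccTrans.Realizes (T : NoAccTrans A B) (w : ℕ → A) (x : ℕ → B) : Prop :=
  ∃ cfg tr, IsRun T.toTwoWayAut w cfg tr ∧ ReadsWhole T.toTwoWayAut cfg ∧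
    FlattenTo (fun i => T.out (tr i)) x

/-! ## One-way parity automata, transducers, and copyless parity streaming string
transducers.  A one-way automaton has only forward states and never reads the end-marker,
so we use a simplified (equivalent) presentation. -/

structure OnewayAut (A : Type) where
  Q : Type
  finQ : Fintype Q
  init : Q
  Δ : Set (Q × A × Q)
  CIdx : Type
  finC : Fintype CIdx
  color : CIdx → (Q × A × Q) → ℕ

attribute [instance] OnewayAut.finQ
attribute [instance] OnewayAut.finC

def OnewayDet (M : OnewayAut A) : Prop :=
  ∀ p a q q', (p, a, q) ∈ M.Δ → (p, a, q') ∈ M.Δ → q = q'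

def OnewayRun (M : OnewayAut A) (w : ℕ → A) (s : ℕ → M.Q) : Prop :=
  s 0 = M.init ∧ ∀ i, (s i, w i, s (i + 1)) ∈ M.Δ

def OnewayParityCond (M : OnewayAut A) (tr : ℕ → M.Q × A × M.Q) : Prop :=
  ∀ c : M.CIdx, Even (sInf {m : ℕ | ∃ t, InfOften tr t ∧ M.color c t = m})

def OnewayAut.Accepts (M : OnewayAut A) (w : ℕ → A) : Prop :=
  ∃ s, OnewayRun M w s ∧ OnewayParityCond M (fun i => (s i, w i, s (i + 1)))

def OnewayColorsLt (M : OnewayAut A) (ℓ : ℕ) : Prop :=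
  ∀ (c : M.CIdx) t, t ∈ M.Δ → M.color c t < ℓ

/-- A one-way (deterministic) parity transducer. -/
structure OnewayTrans (A B : Type) extends OnewayAut A where
  out : (Q × A × Q) → List B

def OnewayTrans.Realizes (T : OnewayTrans A B) (w : ℕ → A) (x : ℕ → B) : Prop :=
  ∃ s, OnewayRun T.toOnewayAut w s ∧
    OnewayParityCond T.toOnewayAut (fun i => (s i, w i, s (i + 1))) ∧
    FlattenTo (fun i => T.out (s i, w i, s (i + 1))) x

/-- Number of occurrences of `a` in the list `l` (classically). -/
noncomputable def occ {C : Type} (a : C) (l : List C) : ℕ :=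
  l.countP fun x => @decide (x = a) (Classical.propDecidable _)

/-- A substitution `σ : R → (R ⊎ B)*` is copyless if every register occurs at most once in
the concatenation of all the `σ r'`. -/
def Copyless {R C : Type} [Fintype R] (σ : R → List (R ⊕ C)) : Prop :=
  ∀ r : R, (∑ r' : R, occ (Sum.inl r) (σ r')) ≤ 1

/-- Applying an assignment `ν : R → B*` (extended to a morphism `(R ⊎ B)* → B*`). -/
def subApply {R C : Type} (ν : R → List C) : List (R ⊕ C) → List C
  | [] => []
  | Sum.inl r :: l => ν r ++ subApply ν l
  | Sum.inr b :: l => b :: subApply ν l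

/-- A copyless parity streaming string transducer: a (deterministic) one-way parity
automaton with a finite set `R` of registers, a distinguished output register, and copyless
register updates, where the update of `outReg` always starts with `outReg`. -/
structure CPSST (A B : Type) extends OnewayAut A where
  R : Type
  finR : Fintype R
  outReg : R
  upd : (Q × A × Q) → R → List (R ⊕ B)
  copyless : ∀ t, @Copyless R B finR (upd t)
  out_form : ∀ t, ∃ γ, upd t outReg = Sum.inl outReg :: γ

attribute [instance] CPSST.finR

/-- The register contents along a run: `ν_0 r = ε` and `ν_{i+1} = ν_i ∘ λ(t_i)`. -/
def regVal (T : CPSST A B) (w : ℕ → A) (s : ℕ → T.Q) : ℕ → T.R → List B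
  | 0 => fun _ => []
  | i + 1 => fun r => subApply (regVal T w s i) (T.upd (s i, w i, s (i + 1)) r)

/-- `T.Realizes w x` : the (deterministic) CPSST `T` has an accepting run on `w` whose
output-register contents are unbounded with limit `x`. -/
def CPSST.Realizes (T : CPSST A B) (w : ℕ → A) (x : ℕ → B) : Prop :=
  ∃ s, OnewayRun T.toOnewayAut w s ∧
    OnewayParityCond T.toOnewayAut (fun i => (s i, w i, s (i + 1))) ∧
    (∀ i, IsPrefixOf (regVal T w s i T.outReg) x) ∧
    (∀ m, ∃ i, m ≤ (regVal T w s i T.outReg).length)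

/-- The one-way parity transducer with the same underlying automaton as the CPSST `T`,
which outputs on each transition the (copyless) substitution that `T` applies. -/
def enrich (T : CPSST A B) :
    OnewayTrans A {σ : T.R → List (T.R ⊕ B) // Copyless σ} where
  toOnewayAut := T.toOnewayAut
  out := fun t => [⟨T.upd t, T.copyless t⟩]

/-! ## Merging forests -/

/-- A merging forest on `(Q⁺ ⊎ Q⁻, χ, ℓ)`: a finite rooted forest (given by a `parent` map
with no cycles) whose leaves (childless nodes) are injectively labeled in `Q⁻` and carry a
`χ`-tuple of integers `< ℓ`, whose roots are injectively labeled in `Q⁺`, and in which every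
unary node (exactly one child) is a root. -/
structure MForest (Qp Qm χ : Type) (ℓ : ℕ) where
  V : Type
  finV : Fintype V
  parent : V → Option V
  acyc : ∀ v : V, ¬ Relation.TransGen (fun a b => parent a = some b) v v
  leafLab : V → Qm
  rootLab : V → Qp
  tup : V → χ → ℕ
  tup_lt : ∀ v, (∀ u, parent u ≠ some v) → ∀ c, tup v c < ℓ
  leaf_inj : ∀ u v, (∀ u', parent u' ≠ some u) → (∀ v', parent v' ≠ some v) →
    leafLab u = leafLab v → u = v
  root_inj : ∀ u v, parent u = none → parent v = none → rootLab u = rootLab v → u = v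
  unary_root : ∀ v : V, (∃! u, parent u = some v) → parent v = none

attribute [instance] MForest.finV

/-- Isomorphism of merging forests: a bijection of the nodes commuting with `parent` and
preserving the leaf labels, the leaf tuples and the root labels. -/
def MFIso {Qp Qm χ : Type} {ℓ : ℕ} (F G : MForest Qp Qm χ ℓ) : Prop :=
  ∃ e : F.V ≃ G.V,
    (∀ v, G.parent (e v) = Option.map e (F.parent v)) ∧
    (∀ v, (∀ u, F.parent u ≠ some v) →
      F.leafLab v = G.leafLab (e v) ∧ ∀ c, F.tup v c = G.tup (e v) c) ∧
    (∀ v, F.parent v = none → F.rootLab v = G.rootLab (e v))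

end Paper

namespace Paper

/-- One step of a deterministic automaton depends only on the letters up to the head. -/
theorem stepVia_det (M : TwoWayAut A) (hdet : Deterministic M) (x y : ℕ → A)
    (c d d' : M.Q × ℕ) (t t' : M.Q × Option A × M.Q)
    (hxy : ∀ m, m ≤ c.2 → x m = y m)
    (h : StepVia M x c t d) (h' : StepVia M y c t' d') : t = t' ∧ d = d' := by
  obtain ⟨p, a, q⟩ := t
  obtain ⟨p', a', q'⟩ := t'
  obtain ⟨c1, c2⟩ := c
  obtain ⟨d1, d2⟩ := d
  obtain ⟨e1, e2⟩ := d'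
  obtain ⟨h1, h2, h3, h4⟩ := h
  obtain ⟨g1, g2, g3, g4⟩ := h'
  simp only at h2 h3 h4 g2 g3 g4 hxy
  subst h2 h3 g2 g3
  have e0 := hxy c2 le_rfl
  have e1 := hxy (c2 - 1) (Nat.sub_le _ _)
  rw [e0, e1] at h4
  have ha : a = a' := by
    rcases h4 with h | h | h <;> rcases g4 with g | g | g
    · exact h.2.1.trans g.2.1.symm
    · exact absurd h.1 g.1
    · exact absurd h.1 g.1
    · exact absurd g.1 h.1
    · exact h.2.2.1.trans g.2.2.1.symm
    · omega
    · exact absurd g.1 h.1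
    · omega
    · exact h.2.2.1.trans g.2.2.1.symm
  subst ha
  have hq := hdet _ _ _ _ h1 g1
  subst hq
  refine ⟨rfl, ?_⟩
  have : d2 = e2 := by
    by_cases f1 : M.fwd p' <;> by_cases f2 : M.fwd q <;>
      simp only [f1, f2, not_true, not_false_iff, true_and, false_and, or_false, false_or] at h4 g4 <;>
      omega
  rw [this]

/-- One step moves the head to the right by at most one. -/
theorem stepVia_pos (M : TwoWayAut A) (x : ℕ → A) (c d : M.Q × ℕ)
    (t : M.Q × Option A × M.Q) (h : StepVia M x c t d) : d.2 ≤ c.2 + 1 := by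
  obtain ⟨_, _, _, h4⟩ := h
  omega

theorem run_pos (M : TwoWayAut A) (x : ℕ → A) (cfg : ℕ → M.Q × ℕ)
    (tr : ℕ → M.Q × Option A × M.Q) (h : IsRun M x cfg tr) : ∀ k, (cfg k).2 ≤ k := by
  intro k
  induction k with
  | zero => rw [h.1]
  | succ k ih => have := stepVia_pos M x _ _ _ (h.2 k); omega

/-- Runs on words agreeing on `n` letters agree for `n` steps. -/
theorem run_agree (M : TwoWayAut A) (hdet : Deterministic M) (x y : ℕ → A)
    (cfg cfg' : ℕ → M.Q × ℕ) (tr tr' : ℕ → M.Q × Option A × M.Q)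
    (h : IsRun M x cfg tr) (h' : IsRun M y cfg' tr') (n : ℕ)
    (hxy : ∀ m, m < n → x m = y m) :
    ∀ k, k ≤ n → cfg k = cfg' k ∧ ∀ l, l < k → tr l = tr' l := by
  intro k
  induction k with
  | zero => intro _; exact ⟨h.1.trans h'.1.symm, fun l hl => absurd hl (Nat.not_lt_zero l)⟩
  | succ k ih =>
    intro hk
    obtain ⟨e, f⟩ := ih (by omega)
    have hp := run_pos M x cfg tr h k
    have s' := h'.2 k
    rw [← e] at s'
    obtain ⟨a, b⟩ := stepVia_det M hdet x y _ _ _ _ _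
      (fun m hm => hxy m (by omega)) (h.2 k) s'
    refine ⟨b, fun l hl => ?_⟩
    rcases Nat.lt_succ_iff_lt_or_eq.mp hl with hl | hl
    · exact f l hl
    · rw [hl]; exact a

theorem prefixCat_congr {C : Type} (f g : ℕ → List C) (n : ℕ)
    (h : ∀ k, k < n → f k = g k) : prefixCat f n = prefixCat g n := by
  induction n with
  | zero => rfl
  | succ n ih =>
    simp only [prefixCat]
    rw [ih (fun k hk => h k (by omega)), h n (by omega)]

/-- The partial function realized by a deterministic two-way parity
transducer is continuous on its domain: for every `x` in the domain and every `i`, there is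
`j` such that any `y` in the domain agreeing with `x` on its first `j` letters has its image
agreeing with the image of `x` on the first `i` letters (i.e. `|x ∧ y| ≥ j` implies
`|⟦T⟧x ∧ ⟦T⟧y| ≥ i` for the metric `d(u,v) = 2^{-|u∧v|}`). -/
theorem dbt_continuous (A B : Type) [Fintype A] [Fintype B]
    (T : TwoWayTrans A B) (hdet : Deterministic T.toTwoWayAut) :
    ∀ (x : ℕ → A) (fx : ℕ → B), T.Realizes x fx →
      ∀ i : ℕ, ∃ j : ℕ, ∀ (y : ℕ → A) (fy : ℕ → B), T.Realizes y fy →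
        (∀ m, m < j → x m = y m) → (∀ m, m < i → fx m = fy m) := by
  rintro x fx ⟨cfg, tr, hrun, -, -, hpre, hlen⟩ i
  obtain ⟨n, hn⟩ := hlen i
  refine ⟨n, ?_⟩
  rintro y fy ⟨cfg', tr', hrun', -, -, hpre', -⟩ hxy m hm
  have hag := (run_agree _ hdet x y cfg cfg' tr tr' hrun hrun' n hxy n le_rfl).2
  have hc := prefixCat_congr (fun i => T.out (tr i)) (fun i => T.out (tr' i)) n
    (fun k hk => by simp only [hag k hk])
  have h1 := hpre n
  have h2 := hpre' n
  rw [← hc] at h2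
  rw [← h1 m (by omega), ← h2 m (by omega)]

end Paper
end

section
/- Let A be a finite alphabet and # ∉ A a fresh letter. Define the map-copy-reverse function mcr : (A ⊎ {#})^ω ⇀ (A ⊎ {#})^ω by mcr(u₁#u₂#u₃#⋯) = u₁#ũ₁#u₂#ũ₂#u₃#ũ₃#⋯ for words containing infinitely many occurrences of # (where u₁, u₂, … ∈ A* are the maximal #-free blocks and ṽ denotes the mirror image of v), and mcr(u₁#⋯#u_n#u) = u₁#ũ₁#⋯#u_n#ũ_n#u when u ∈ A^ω contains no #. Then there exists a reversible two-way parity transducer realizing mcr. -/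
namespace Paper

/-- A block `u ∈ A*` followed by the separator `#` (encoded as `none`). -/
def hashWord {A : Type} (u : List A) : List (Option A) := u.map some ++ [none]

/-- `u # ũ #` where `ũ` is the mirror image of `u`. -/
def mirrorPair {A : Type} (u : List A) : List (Option A) :=
  hashWord u ++ hashWord u.reverse

/-- The infinite word `w` is the finite word `p` followed by the infinite word `t`. -/
def AppendTo {C : Type} (p : List C) (t : ℕ → C) (w : ℕ → C) : Prop :=
  (∀ (i : ℕ) (h : i < p.length), p.get ⟨i, h⟩ = w i) ∧ ∀ i, w (p.length + i) = t i

/-- The graph of the map-copy-reverse function `mcr : (A ⊎ {#})^ω ⇀ (A ⊎ {#})^ω`, with `#`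
encoded as `none`: for `w = u₁#u₂#⋯` with infinitely many `#`,
`mcr w = u₁#ũ₁#u₂#ũ₂#⋯`; and for `w = u₁#⋯#u_n#u` with `u ∈ A^ω` (no further `#`),
`mcr w = u₁#ũ₁#⋯#u_n#ũ_n#u`. -/
def MCR {A : Type} (w x : ℕ → Option A) : Prop :=
  (∃ u : ℕ → List A,
      FlattenTo (fun n => hashWord (u n)) w ∧
      FlattenTo (fun n => mirrorPair (u n)) x) ∨
  (∃ (us : List (List A)) (v : ℕ → A),
      AppendTo (us.foldr (fun b acc => hashWord b ++ acc) []) (fun i => some (v i)) w ∧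
      AppendTo (us.foldr (fun b acc => mirrorPair b ++ acc) []) (fun i => some (v i)) x)

/-- States: `F` copies forward, `R` goes backward outputting the mirror image,
`S` skips forward to the separator. -/
inductive St where
  | F | R | S

instance instFintypeSt : Fintype St :=
  ⟨⟨([St.F, St.R, St.S] : List St), by simp⟩, by intro x; cases x <;> simp⟩

def nx {A : Type} : St → Option (Option A) → Option St
  | .F, some (some _) => some .F
  | .F, some none => some .R
  | .F, none => none
  | .R, some (some _) => some .R
  | .R, some none => some .S
  | .R, none => some .S
  | .S, some (some _) => some .S
  | .S, some none => some .F
  | .S, none => none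

def outSt {A : Type} : St → Option (Option A) → List (Option A)
  | .F, some a => [a]
  | .R, some (some a) => [some a]
  | .S, some none => [none]
  | _, _ => []

def mcrT (A : Type) : TwoWayTrans (Option A) (Option A) where
  Q := St
  finQ := instFintypeSt
  fwd := fun q => q ≠ St.R
  init := St.F
  init_fwd := by simp
  Δ := {t | nx t.1 t.2.1 = some t.2.2}
  marker := by
    intro p q h
    cases p <;> cases q <;> simp [nx] at h ⊢
  CIdx := Empty
  finC := inferInstance
  color := fun e => e.elim
  out := fun t => outSt t.1 t.2.1

theorem nx_inj {A : Type} (p p' : St) (a : Option (Option A)) (q : St)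
    (h1 : nx p a = some q) (h2 : nx p' a = some q) : p = p' := by
  cases p <;> cases p' <;> cases q <;> rcases a with _ | _ | a <;> simp [nx] at h1 h2 ⊢

theorem mcrT_rev (A : Type) : Reversible (mcrT A).toTwoWayAut := by
  constructor
  · intro p a q q' h h'
    have h1 : nx p a = some q := h
    have h2 : nx p a = some q' := h'
    rw [h1] at h2
    exact Option.some.inj h2
  · intro p p' a q h h'
    have h1 : nx p a = some q := h
    have h2 : nx p' a = some q := h'
    exact nx_inj p p' a q h1 h2

def rd {A : Type} (w : ℕ → Option A) : St × ℕ → Option (Option A)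
  | (.R, 0) => none
  | (.R, p + 1) => some (w p)
  | (.F, p) => some (w p)
  | (.S, p) => some (w p)

def stp {A : Type} (w : ℕ → Option A) : St × ℕ → St × ℕ
  | (.F, p) => match w p with
    | some _ => (.F, p + 1)
    | none => (.R, p)
  | (.R, 0) => (.S, 0)
  | (.R, p + 1) => match w p with
    | some _ => (.R, p)
    | none => (.S, p + 1)
  | (.S, p) => match w p with
    | some _ => (.S, p + 1)
    | none => (.F, p + 1)

def trn {A : Type} (w : ℕ → Option A) (c : St × ℕ) : St × Option (Option A) × St :=
  (c.1, rd w c, (stp w c).1)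

theorem stepVia_iff {A : Type} (w : ℕ → Option A) (c : St × ℕ)
    (t : St × Option (Option A) × St) (c' : St × ℕ) :
    StepVia (mcrT A).toTwoWayAut w c t c' ↔ t = trn w c ∧ c' = stp w c := by
  obtain ⟨q, p⟩ := c
  obtain ⟨t1, t2, t3⟩ := t
  obtain ⟨q', p'⟩ := c'
  simp only [StepVia, mcrT, trn, Prod.mk.injEq]
  constructor
  · rintro ⟨h1, rfl, rfl, h2⟩
    replace h1 : nx t1 t2 = some t3 := h1
    cases t1
    · rcases h : w p with _ | a <;> cases t3 <;> simp [stp, rd, h] at h2 ⊢ <;>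
        simp_all [nx]
    · rcases p with _ | p
      · cases t3 <;> simp [stp, rd] at h2 ⊢ <;> simp_all [nx]
      · rcases h : w p with _ | a <;> cases t3 <;> simp [stp, rd, h] at h2 ⊢ <;>
          simp_all [nx]
    · rcases h : w p with _ | a <;> cases t3 <;> simp [stp, rd, h] at h2 ⊢ <;>
        simp_all [nx]
  · rintro ⟨⟨rfl, rfl, rfl⟩, h2⟩
    refine (and_congr_left' (a := nx t1 (rd w (t1, p)) = some (stp w (t1, p)).1)
      (Iff.refl _)).1 ?_
    cases t1
    · rcases h : w p with _ | a <;> simp_all [nx, stp, rd]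
    · rcases p with _ | p
      · simp_all [nx, stp, rd]
      · rcases h : w p with _ | a <;> simp_all [nx, stp, rd]
    · rcases h : w p with _ | a <;> simp_all [nx, stp, rd]

def cfgs {A : Type} (w : ℕ → Option A) : ℕ → St × ℕ
  | 0 => (.F, 0)
  | n + 1 => stp w (cfgs w n)

/-- Output produced when leaving a configuration. -/
def oc {A : Type} (w : ℕ → Option A) (c : St × ℕ) : List (Option A) := outSt c.1 (rd w c)

def outs {A : Type} (w : ℕ → Option A) (n : ℕ) : List (Option A) := oc w (cfgs w n)

theorem realizes_iff {A : Type} (w x : ℕ → Option A) :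
    (mcrT A).Realizes w x ↔ (∀ n, ∃ i, n ≤ (cfgs w i).2) ∧ FlattenTo (outs w) x := by
  constructor
  · rintro ⟨cfg, tr, ⟨h0, hs⟩, hr, -, hf⟩
    have hs' : ∀ i, tr i = trn w (cfg i) ∧ cfg (i + 1) = stp w (cfg i) :=
      fun i => (stepVia_iff w _ _ _).1 (hs i)
    have hc : ∀ i, cfg i = cfgs w i := by
      intro i
      induction i with
      | zero => exact h0
      | succ k ih => rw [(hs' k).2, ih]; rfl
    refine ⟨fun n => ?_, ?_⟩
    · obtain ⟨i, hi⟩ := hr n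
      exact ⟨i, by rw [← hc i]; exact hi⟩
    · have : (fun i => (mcrT A).out (tr i)) = outs w := by
        funext i
        rw [(hs' i).1, hc i]
        rfl
      rw [← this]
      exact hf
  · rintro ⟨hr, hf⟩
    exact ⟨cfgs w, fun i => trn w (cfgs w i),
      ⟨rfl, fun i => (stepVia_iff w _ _ _).2 ⟨rfl, rfl⟩⟩, hr, fun c => c.elim, hf⟩

theorem flatten_unique {C : Type} {f : ℕ → List C} {x y : ℕ → C}
    (hx : FlattenTo f x) (hy : FlattenTo f y) : x = y := by
  funext m
  obtain ⟨n, hn⟩ := hx.2 (m + 1)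
  rw [← hx.1 n m hn, ← hy.1 n m hn]

theorem prefixCat_mono {C : Type} (f : ℕ → List C) {m n : ℕ} (h : m ≤ n) :
    prefixCat f m <+: prefixCat f n := by
  induction n, h using Nat.le_induction with
  | base => exact List.prefix_rfl
  | succ k _ ih => exact ih.trans (List.prefix_append _ _)

theorem isPrefixOf_of_prefix {C : Type} {l l' : List C} {x : ℕ → C} (h : l <+: l')
    (h' : IsPrefixOf l' x) : IsPrefixOf l x := by
  intro i hi
  rw [← h' i (lt_of_lt_of_le hi h.length_le)]
  simpa using h.getElem hi

theorem realizes_of {A : Type} {w x : ℕ → Option A}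
    (h : ∀ m, ∃ n, m ≤ n ∧ m ≤ (cfgs w n).2 ∧ IsPrefixOf (prefixCat (outs w) n) x ∧
      m ≤ (prefixCat (outs w) n).length) : (mcrT A).Realizes w x := by
  rw [realizes_iff]
  refine ⟨fun m => ?_, fun m => ?_, fun m => ?_⟩
  · obtain ⟨n, h1, h2, h3, h4⟩ := h m
    exact ⟨n, h2⟩
  · obtain ⟨n, h1, h2, h3, h4⟩ := h m
    exact isPrefixOf_of_prefix (prefixCat_mono _ h1) h3
  · obtain ⟨n, h1, h2, h3, h4⟩ := h m
    exact ⟨n, h4⟩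

theorem outs_len {A : Type} (w : ℕ → Option A) (n : ℕ) :
    (prefixCat (outs w) n).length ≤ n := by
  induction n with
  | zero => simp [prefixCat]
  | succ k ih =>
    have : (outs w k).length ≤ 1 := by
      unfold outs oc outSt
      split <;> simp
    simp only [prefixCat, List.length_append]
    omega

inductive Reach {A : Type} (w : ℕ → Option A) : St × ℕ → List (Option A) → St × ℕ → Prop
  | refl (c) : Reach w c [] c
  | head (c l c') : Reach w (stp w c) l c' → Reach w c (oc w c ++ l) c'

theorem Reach.trans {A : Type} {w : ℕ → Option A} {c c' c'' l l'}
    (h : Reach w c l c') (h' : Reach w c' l' c'') : Reach w c (l ++ l') c'' := by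
  induction h with
  | refl => exact h'
  | head c l c' _ ih => rw [List.append_assoc]; exact .head _ _ _ (ih h')

theorem Reach.single {A : Type} {w : ℕ → Option A} {c l c'}
    (h1 : stp w c = c') (h2 : oc w c = l) : Reach w c l c' := by
  subst h1 h2
  simpa using Reach.head c [] _ (.refl (w := w) _)

theorem Reach.run {A : Type} {w : ℕ → Option A} {c l c'} (h : Reach w c l c') :
    ∀ n, cfgs w n = c → ∃ m, cfgs w m = c' ∧
      prefixCat (outs w) m = prefixCat (outs w) n ++ l := by
  induction h with
  | refl c => intro n hn; exact ⟨n, hn, by simp⟩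
  | head c l c' _ ih =>
    intro n hn
    obtain ⟨m, h1, h2⟩ := ih (n + 1) (by simp [cfgs, hn])
    exact ⟨m, h1, by rw [h2]; simp [prefixCat, outs, hn]⟩

/-- The word `l` occurs in `w` at position `p`. -/
def Seg {C : Type} (w : ℕ → C) (p : ℕ) (l : List C) : Prop :=
  ∀ (i : ℕ) (h : i < l.length), l.get ⟨i, h⟩ = w (p + i)

theorem seg_nil {C : Type} (w : ℕ → C) (p : ℕ) : Seg w p [] := by
  intro i h; simp at h

theorem seg_cons {C : Type} {w : ℕ → C} {p : ℕ} {a : C} {l : List C} :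
    Seg w p (a :: l) ↔ w p = a ∧ Seg w (p + 1) l := by
  constructor
  · intro h
    refine ⟨(h 0 (by simp)).symm, fun i hi => ?_⟩
    have := h (i + 1) (by simpa using hi)
    rw [show p + 1 + i = p + (i + 1) by omega, ← this]
    simp
  · rintro ⟨h1, h2⟩ i hi
    rcases i with _ | i
    · simpa using h1.symm
    · have := h2 i (by simpa using hi)
      rw [show p + (i + 1) = p + 1 + i by omega, ← this]
      simp

theorem seg_append {C : Type} {w : ℕ → C} {p : ℕ} {l l' : List C} :
    Seg w p (l ++ l') ↔ Seg w p l ∧ Seg w (p + l.length) l' := by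
  induction l generalizing p with
  | nil => simp [seg_nil]
  | cons a l ih =>
    rw [List.cons_append, seg_cons, seg_cons, ih, and_assoc, List.length_cons,
      show p + 1 + l.length = p + (l.length + 1) by omega]

theorem isPrefixOf_iff {C : Type} {w : ℕ → C} {l : List C} : IsPrefixOf l w ↔ Seg w 0 l := by
  simp [IsPrefixOf, Seg]

theorem reach_copy {A : Type} {w : ℕ → Option A} (u : List A) {p : ℕ}
    (h : Seg w p (u.map some)) : Reach w (.F, p) (u.map some) (.F, p + u.length) := by
  induction u generalizing p with
  | nil => exact .refl _
  | cons a u ih =>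
    rw [List.map_cons, seg_cons] at h
    have := (Reach.single (w := w) (c := (.F, p)) (l := [some a]) (c' := (.F, p + 1))
      (by simp [stp, h.1]) (by simp [oc, rd, outSt, h.1])).trans (ih h.2)
    rw [List.length_cons, show p + (u.length + 1) = p + 1 + u.length by omega]
    exact this

theorem reach_skip {A : Type} {w : ℕ → Option A} (u : List A) {p : ℕ}
    (h : Seg w p (u.map some)) : Reach w (.S, p) [] (.S, p + u.length) := by
  induction u generalizing p with
  | nil => exact .refl _
  | cons a u ih =>
    rw [List.map_cons, seg_cons] at h
    have := (Reach.single (w := w) (c := (.S, p)) (l := []) (c' := (.S, p + 1))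
      (by simp [stp, h.1]) (by simp [oc, rd, outSt, h.1])).trans (ih h.2)
    rw [List.length_cons, show p + (u.length + 1) = p + 1 + u.length by omega]
    exact this

theorem reach_back {A : Type} {w : ℕ → Option A} (u : List A) {p : ℕ}
    (h : Seg w p (u.map some)) (hp : p = 0 ∨ w (p - 1) = none) :
    Reach w (.R, p + u.length) (u.reverse.map some) (.S, p) := by
  induction u using List.reverseRecOn with
  | nil =>
    rcases p with _ | p
    · exact .single rfl rfl
    · have hp' : w p = none := by simpa using hp
      exact .single (by simp [stp, hp']) (by simp [oc, rd, outSt, hp'])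
  | append_singleton u a ih =>
    rw [List.map_append, seg_append, List.map_singleton, seg_cons, List.length_map] at h
    have := (Reach.single (w := w) (c := (.R, p + u.length + 1)) (l := [some a])
      (c' := (.R, p + u.length))
      (by simp [stp, h.2.1]) (by simp [oc, rd, outSt, h.2.1])).trans (ih h.1)
    simpa [add_assoc] using this

theorem hashWord_length {A : Type} (u : List A) : (hashWord u).length = u.length + 1 := by
  simp [hashWord]

theorem reach_block {A : Type} {w : ℕ → Option A} (u : List A) {p : ℕ}
    (h : Seg w p (hashWord u)) (hp : p = 0 ∨ w (p - 1) = none) :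
    Reach w (.F, p) (mirrorPair u) (.F, p + (hashWord u).length) := by
  unfold hashWord at h
  rw [seg_append, seg_cons, List.length_map] at h
  obtain ⟨h1, h2, -⟩ := h
  have := ((((reach_copy u h1).trans (Reach.single (w := w) (l := [none])
    (c' := (.R, p + u.length)) (by simp [stp, h2]) (by simp [oc, rd, outSt, h2]))).trans
    (reach_back u h1 hp)).trans (reach_skip u h1)).trans
    (Reach.single (w := w) (l := [none]) (c' := (.F, p + u.length + 1))
      (by simp [stp, h2]) (by simp [oc, rd, outSt, h2]))
  rw [hashWord_length]
  simpa [mirrorPair, hashWord, add_assoc] using this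

theorem seg_last {A : Type} {w : ℕ → Option A} {u : List A} {p : ℕ}
    (h : Seg w p (hashWord u)) : w (p + (hashWord u).length - 1) = none := by
  unfold hashWord at h
  rw [seg_append, seg_cons, List.length_map] at h
  rw [hashWord_length]
  exact h.2.1

theorem le_prefixCat {C : Type} (f : ℕ → List C) (hf : ∀ n, 1 ≤ (f n).length) (n : ℕ) :
    n ≤ (prefixCat f n).length := by
  induction n with
  | zero => simp
  | succ k ih => have := hf k; simp only [prefixCat, List.length_append]; omega

theorem reach_inf {A : Type} {w : ℕ → Option A} {u : ℕ → List A}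
    (h : ∀ n, Seg w 0 (prefixCat (fun n => hashWord (u n)) n)) (n : ℕ) :
    Reach w (.F, 0) (prefixCat (fun n => mirrorPair (u n)) n)
      (.F, (prefixCat (fun n => hashWord (u n)) n).length) ∧
    ((prefixCat (fun n => hashWord (u n)) n).length = 0 ∨
      w ((prefixCat (fun n => hashWord (u n)) n).length - 1) = none) := by
  induction n with
  | zero => exact ⟨.refl _, Or.inl rfl⟩
  | succ k ih =>
    have hk := h (k + 1)
    simp only [prefixCat] at hk ⊢
    rw [seg_append, Nat.zero_add] at hk
    rw [List.length_append]
    exact ⟨ih.1.trans (reach_block _ hk.2 ih.2), Or.inr (seg_last hk.2)⟩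

theorem reach_fin {A : Type} {w : ℕ → Option A} (us : List (List A)) {p : ℕ}
    (hp : p = 0 ∨ w (p - 1) = none)
    (h : Seg w p (us.foldr (fun b acc => hashWord b ++ acc) [])) :
    Reach w (.F, p) (us.foldr (fun b acc => mirrorPair b ++ acc) [])
      (.F, p + (us.foldr (fun b acc => hashWord b ++ acc) []).length) := by
  induction us generalizing p with
  | nil => exact .refl _
  | cons b us ih =>
    simp only [List.foldr_cons] at h ⊢
    rw [seg_append] at h
    rw [List.length_append, ← add_assoc]
    exact (reach_block b h.1 hp).trans (ih (Or.inr (seg_last h.1)) h.2)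

theorem seg_ofFn {A : Type} {w : ℕ → Option A} {v : ℕ → A} {p : ℕ}
    (h : ∀ i, w (p + i) = some (v i)) (m : ℕ) :
    Seg w p (((List.range m).map v).map some) := by
  intro i hi
  simp [h i]

theorem mcr_realizes {A : Type} {w x : ℕ → Option A} (h : MCR w x) :
    (mcrT A).Realizes w x := by
  apply realizes_of
  intro m
  rcases h with ⟨u, hw, hx⟩ | ⟨us, v, hw, hx⟩
  · have hw' := fun n => isPrefixOf_iff.1 (hw.1 n)
    obtain ⟨n, h1, h2⟩ := (reach_inf hw' m).1.run 0 rfl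
    have h3 : prefixCat (outs w) n = prefixCat (fun n => mirrorPair (u n)) m := by
      simpa [prefixCat] using h2
    have h4 := le_prefixCat (fun n => mirrorPair (u n))
      (fun n => by simp [mirrorPair, hashWord]; omega) m
    have h5 := le_prefixCat (fun n => hashWord (u n)) (fun n => by simp [hashWord]) m
    refine ⟨n, ?_, ?_, ?_, ?_⟩
    · have := outs_len w n
      rw [h3] at this
      omega
    · rw [h1]; exact h5
    · rw [h3]; exact hx.1 m
    · rw [h3]; exact h4
  · have hw1 : Seg w 0 (us.foldr (fun b acc => hashWord b ++ acc) []) := isPrefixOf_iff.1 hw.1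
    have hx1 : Seg x 0 (us.foldr (fun b acc => mirrorPair b ++ acc) []) := isPrefixOf_iff.1 hx.1
    have hr := (reach_fin us (Or.inl rfl) hw1).trans
      (reach_copy ((List.range m).map v) (seg_ofFn (by simpa using hw.2) m))
    obtain ⟨n, h1, h2⟩ := hr.run 0 rfl
    simp only [prefixCat, List.nil_append] at h2
    have h4 : m ≤ (prefixCat (outs w) n).length := by rw [h2]; simp
    refine ⟨n, h4.trans (outs_len w n), ?_, ?_, h4⟩
    · rw [h1]; simp
    · rw [h2, isPrefixOf_iff, seg_append]
      exact ⟨hx1, seg_ofFn (by simpa using hx.2) m⟩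

theorem exists_block {A : Type} {w : ℕ → Option A} (d : ℕ) :
    ∀ p, w (p + d) = none → ∃ u : List A, Seg w p (hashWord u) := by
  induction d with
  | zero => intro p h; exact ⟨[], by simpa [hashWord, seg_cons, seg_nil] using h⟩
  | succ d ih =>
    intro p h
    rcases hp : w p with _ | a
    · exact ⟨[], by simpa [hashWord, seg_cons, seg_nil] using hp⟩
    · obtain ⟨u, hu⟩ := ih (p + 1) (by rw [← h]; congr 1; omega)
      refine ⟨a :: u, ?_⟩
      simp only [hashWord, List.map_cons, List.cons_append]
      rw [seg_cons]
      exact ⟨hp, hu⟩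

theorem exists_flatten {C : Type} (f : ℕ → List C) (hf : ∀ n, 1 ≤ (f n).length) :
    ∃ x, FlattenTo f x := by
  have hl := le_prefixCat f hf
  refine ⟨fun m => (prefixCat f (m + 1)).get ⟨m, hl (m + 1)⟩, fun n i hi => ?_,
    fun m => ⟨m, hl m⟩⟩
  rcases le_total n (i + 1) with h | h
  · simpa using (prefixCat_mono f h).getElem hi
  · simpa using ((prefixCat_mono f h).getElem (hl (i + 1))).symm

theorem exists_tail {A : Type} {w : ℕ → Option A} (N : ℕ) (hN : ∀ q, N ≤ q → w q ≠ none) (d : ℕ) :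
    ∀ p, N ≤ p + d → ∃ (us : List (List A)) (v : ℕ → A),
      Seg w p (us.foldr (fun b acc => hashWord b ++ acc) []) ∧
      ∀ i, w (p + (us.foldr (fun b acc => hashWord b ++ acc) []).length + i) = some (v i) := by
  induction d with
  | zero =>
    intro p hp
    have : ∀ i, ∃ a, w (p + i) = some a :=
      fun i => Option.ne_none_iff_exists'.1 (hN _ (by omega))
    choose v hv using this
    exact ⟨[], v, seg_nil _ _, hv⟩
  | succ d ih =>
    intro p hp
    by_cases hq : ∃ e, w (p + e) = none
    · obtain ⟨e, he⟩ := hq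
      obtain ⟨u, hu⟩ := exists_block e p he
      obtain ⟨us, v, h1, h2⟩ := ih (p + (hashWord u).length) (by rw [hashWord_length]; omega)
      refine ⟨u :: us, v, ?_, ?_⟩
      · rw [List.foldr_cons, seg_append]
        exact ⟨hu, h1⟩
      · intro i
        rw [List.foldr_cons, List.length_append, ← add_assoc]
        exact h2 i
    · push Not at hq
      have : ∀ i, ∃ a, w (p + i) = some a :=
        fun i => Option.ne_none_iff_exists'.1 (hq i)
      choose v hv using this
      exact ⟨[], v, seg_nil _ _, hv⟩

theorem exists_append {C : Type} (l : List C) (t : ℕ → C) : ∃ x, AppendTo l t x := by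
  refine ⟨fun i => if h : i < l.length then l.get ⟨i, h⟩ else t (i - l.length),
    fun i hi => ?_, fun i => ?_⟩
  · simp [hi]
  · simp

theorem mcr_total {A : Type} (w : ℕ → Option A) : ∃ x, MCR w x := by
  by_cases hN : ∃ N, ∀ q, N ≤ q → w q ≠ none
  · obtain ⟨N, hN⟩ := hN
    obtain ⟨us, v, h1, h2⟩ := exists_tail N hN N 0 (by omega)
    obtain ⟨x, hx⟩ := exists_append (us.foldr (fun b acc => mirrorPair b ++ acc) [])
      (fun i => some (v i))
    exact ⟨x, Or.inr ⟨us, v, ⟨isPrefixOf_iff.2 h1, by simpa using h2⟩, hx⟩⟩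
  · push Not at hN
    have hb : ∀ p, ∃ u : List A, Seg w p (hashWord u) := by
      intro p
      obtain ⟨q, hq, h⟩ := hN p
      exact exists_block (q - p) p (by rw [← h]; congr 1; omega)
    choose U hU using hb
    let P : ℕ → ℕ := fun n => Nat.rec 0 (fun _ p => p + (hashWord (U p)).length) n
    have hl : ∀ n, (prefixCat (fun n => hashWord (U (P n))) n).length = P n := by
      intro n
      induction n with
      | zero => rfl
      | succ k ih => simp only [prefixCat, List.length_append, ih]; rfl
    obtain ⟨x, hx⟩ := exists_flatten (fun n => mirrorPair (U (P n)))
      (fun n => by simp [mirrorPair, hashWord]; omega)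
    refine ⟨x, Or.inl ⟨fun n => U (P n), ⟨fun n => ?_, fun m => ⟨m, ?_⟩⟩, hx⟩⟩
    · rw [isPrefixOf_iff]
      induction n with
      | zero => exact seg_nil _ _
      | succ k ih =>
        simp only [prefixCat]
        rw [seg_append, hl k, Nat.zero_add]
        exact ⟨ih, hU _⟩
    · exact le_prefixCat _ (fun n => by simp [hashWord]) m

/-- The map-copy-reverse function is realized by a reversible two-way
parity transducer. -/
theorem mcr_realized_by_rbt (A : Type) [Fintype A] :
    ∃ T : TwoWayTrans (Option A) (Option A),
      Reversible T.toTwoWayAut ∧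
      (∀ w x, T.Realizes w x ↔ MCR w x) := by
  refine ⟨mcrT A, mcrT_rev A, fun w x => ⟨fun h => ?_, mcr_realizes⟩⟩
  obtain ⟨y, hy⟩ := mcr_total w
  have h1 := ((realizes_iff w x).1 h).2
  have h2 := ((realizes_iff w y).1 (mcr_realizes hy)).2
  rw [flatten_unique h1 h2]
  exact hy

end Paper
end
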